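/- The open interval (24√35/43, (457878845−1713407√87)/133663998) is a gap of the Markov spectrum: M ∩ (24√35/43, (457878845−1713407√87)/133663998) = ∅, while both endpoints 24√35/43 and (457878845−1713407√87)/133663998 belong to M. -/

import Mathlib

open Filter Set MeasureTheory
open scoped ENNReal

/-- Finite continued fraction `[a 0; a 1, ..., a n]`. -/
noncomputable def cfConv : (ℕ → ℝ) → ℕ → ℝ
  | a, 0 => a 0
  | a, n + 1 => a 0 + 1 / cfConv (fun i => a (i + 1)) n

/-- Value of the infinite continued fraction `[a 0; a 1, a 2, ...]`,
as the limit of its convergents. -/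
noncomputable def cfVal (a : ℕ → ℝ) : ℝ := limUnder atTop (cfConv a)

/-- `λ_k(α) = [α_k; α_{k+1}, ...] + [0; α_{k-1}, α_{k-2}, ...]`. -/
noncomputable def lambdaVal (α : ℤ → ℕ) (k : ℤ) : ℝ :=
  cfVal (fun n => (α (k + n) : ℝ)) +
  cfVal (fun n => if n = 0 then 0 else (α (k - n) : ℝ))

/-- The Markov value `m(α) = sup_{k ∈ ℤ} λ_k(α)`. -/
noncomputable def markovValue (α : ℤ → ℕ) : ℝ := ⨆ k : ℤ, lambdaVal α k

/-- The Markov spectrum. -/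
def markovSpectrum : Set ℝ :=
  { x | ∃ α : ℤ → ℕ, (∀ n, 0 < α n) ∧ BddAbove (range (lambdaVal α)) ∧
      markovValue α = x }

/-- The dimension function `d(t) = dim_H (M ∩ (-∞, t))`. -/
noncomputable def dimFun (t : ℝ) : ℝ≥0∞ := dimH (markovSpectrum ∩ Iio t)

/-!
Values below the right endpoint force all letters to be `1` or `2`, and then finitely many letters
around a position already confine the value there to a short interval. This excludes a dozen words
from every sequence whose values all stay below the right endpoint. Around a position whose value
exceeds the left endpoint the excluded words and the value itself determine the letters one after
another, up to reflection, until one of two things happens. Either both tails begin like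
`lowerSeq`, which maximizes such tails among the sequences avoiding the excluded words, so that the
value is at most the left endpoint after all; or both tails flanking the word `121121` begin with
`211222` and are at least as large as that of `upperSeq`. In the second case, since `121121` is
its own reversal and `x ↦ x + 1 / [w; x]` is increasing, the value at the inner end of the larger
tail is at least the right endpoint, a contradiction. The sequences `lowerSeq` and `upperSeq`
themselves realize the endpoints.
-/

lemma cfConv_mem_Icc {a : ℕ → ℝ} (ha : ∀ n, 1 ≤ a (n + 1)) (n : ℕ) :
    cfConv a n ∈ Icc (a 0) (a 0 + 1) := by
  induction n generalizing a with
  | zero => simp [cfConv]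
  | succ n ih =>
    have htail : 1 ≤ cfConv (fun i => a (i + 1)) n :=
      (ha 0).trans (ih (a := fun i => a (i + 1)) fun i => ha (i + 1)).1
    have hinv : 1 / cfConv (fun i => a (i + 1)) n ∈ Ioc 0 1 :=
      ⟨by positivity, (div_le_one (by positivity)).2 htail⟩
    rw [cfConv]
    exact ⟨by linarith [hinv.1], by linarith [hinv.2]⟩

lemma abs_one_div_sub_one_div_le {x y : ℝ} (hx : 1 ≤ x) (hy : 1 ≤ y) :
    |1 / x - 1 / y| ≤ |x - y| := by
  have hxy : 1 ≤ x * y := one_le_mul_of_one_le_of_one_le hx hy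
  have hdiff : 1 / x - 1 / y = (y - x) / (x * y) := by field_simp
  rw [hdiff, abs_div, abs_of_pos (by positivity : 0 < x * y), abs_sub_comm]
  exact div_le_self (abs_nonneg _) hxy

lemma abs_one_div_add_one_div_sub_le {d x y : ℝ} (hd : 1 ≤ d) (hx : 1 ≤ x) (hy : 1 ≤ y) :
    |1 / (d + 1 / x) - 1 / (d + 1 / y)| ≤ |x - y| / 4 := by
  have hX : 2 ≤ d * x + 1 := by nlinarith
  have hY : 2 ≤ d * y + 1 := by nlinarith
  have hdiff : 1 / (d + 1 / x) - 1 / (d + 1 / y) = (x - y) / ((d * x + 1) * (d * y + 1)) := by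
    field_simp
    ring
  rw [hdiff, abs_div, abs_of_pos (by positivity : 0 < (d * x + 1) * (d * y + 1))]
  gcongr
  nlinarith

lemma abs_cfConv_sub_cfConv_le {a : ℕ → ℝ} (ha : ∀ n, 1 ≤ a (n + 1)) {n m : ℕ} (hnm : n ≤ m) :
    |cfConv a n - cfConv a m| ≤ 2 * (1 / 2) ^ n := by
  have hbase : |cfConv a n - cfConv a m| ≤ 1 := by
    have hn := cfConv_mem_Icc ha n
    have hm := cfConv_mem_Icc ha m
    exact abs_sub_le_iff.2 ⟨by linarith [hn.2, hm.1], by linarith [hm.2, hn.1]⟩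
  induction n using Nat.twoStepInduction generalizing a m with
  | zero => linarith
  | one => linarith
  | more n ih _ =>
    obtain ⟨m, rfl⟩ := Nat.exists_eq_add_of_le' (le_of_add_le_right hnm)
    set b : ℕ → ℝ := fun i => a (i + 1 + 1)
    have hb : ∀ i, 1 ≤ b (i + 1) := fun i => ha (i + 1 + 1)
    have hn := cfConv_mem_Icc hb n
    have hm := cfConv_mem_Icc hb m
    have hb0 : 1 ≤ b 0 := ha 1
    have hcontract := abs_one_div_add_one_div_sub_le (ha 0) (hb0.trans hn.1) (hb0.trans hm.1)
    calc |cfConv a (n + 2) - cfConv a (m + 2)|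
        = |1 / (a 1 + 1 / cfConv b n) - 1 / (a 1 + 1 / cfConv b m)| := by
          simp only [cfConv, zero_add, add_sub_add_left_eq_sub, b]
      _ ≤ |cfConv b n - cfConv b m| / 4 := hcontract
      _ ≤ 2 * (1 / 2) ^ n / 4 := by
          gcongr
          exact ih hb (by lia)
            (abs_sub_le_iff.2 ⟨by linarith [hn.2, hm.1], by linarith [hm.2, hn.1]⟩)
      _ = 2 * (1 / 2) ^ (n + 2) := by ring

lemma tendsto_cfConv {a : ℕ → ℝ} (ha : ∀ n, 1 ≤ a (n + 1)) :
    Tendsto (cfConv a) atTop (nhds (cfVal a)) := by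
  refine CauchySeq.tendsto_limUnder
    (cauchySeq_of_le_tendsto_0' (fun n => 2 * (1 / 2 : ℝ) ^ n) (fun n m hnm => ?_) ?_)
  · rw [Real.dist_eq]
    exact abs_cfConv_sub_cfConv_le ha hnm
  · simpa using (tendsto_pow_atTop_nhds_zero_of_lt_one (r := (1 / 2 : ℝ)) (by norm_num)
      (by norm_num)).const_mul 2

lemma le_cfVal {a : ℕ → ℝ} (ha : ∀ n, 1 ≤ a (n + 1)) : a 0 ≤ cfVal a :=
  ge_of_tendsto' (tendsto_cfConv ha) fun n => (cfConv_mem_Icc ha n).1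

lemma cfVal_eq_add_one_div {a : ℕ → ℝ} (ha : ∀ n, 1 ≤ a (n + 1)) :
    cfVal a = a 0 + 1 / cfVal (fun n => a (n + 1)) := by
  have hsucc (n : ℕ) : 1 ≤ a (n + 1 + 1) := ha (n + 1)
  have hpos : 0 < cfVal (fun n => a (n + 1)) := by
    linarith [ha 0, le_cfVal (a := fun n => a (n + 1)) hsucc]
  have hlim : Tendsto (fun n => cfConv a (n + 1)) atTop
      (nhds (a 0 + 1 / cfVal (fun n => a (n + 1)))) :=
    (tendsto_const_nhds.div (tendsto_cfConv (a := fun n => a (n + 1)) hsucc) hpos.ne').const_add _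
  exact ((tendsto_add_atTop_iff_nat 1).1 hlim).limUnder_eq

/-- The continued fraction with natural partial quotients `f 0, f 1, ...`. -/
noncomputable def natCf (f : ℕ → ℕ) : ℝ := cfVal (fun n => (f n : ℝ))

section natCf

variable {f g : ℕ → ℕ}

lemma natCf_eq_add_one_div (hf : ∀ n, 0 < f n) :
    natCf f = f 0 + 1 / natCf (fun n => f (n + 1)) :=
  cfVal_eq_add_one_div (a := fun n => (f n : ℝ)) fun n => by exact_mod_cast hf (n + 1)

lemma one_le_natCf (hf : ∀ n, 0 < f n) : 1 ≤ natCf f :=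
  calc (1 : ℝ) ≤ f 0 := by exact_mod_cast hf 0
    _ ≤ natCf f := le_cfVal (a := fun n => (f n : ℝ)) fun n => by exact_mod_cast hf (n + 1)

lemma lt_natCf (hf : ∀ n, 0 < f n) : (f 0 : ℝ) < natCf f := by
  have htail := one_le_natCf (f := fun n => f (n + 1)) fun n => hf (n + 1)
  rw [natCf_eq_add_one_div hf]
  exact lt_add_of_pos_right _ (by positivity)

lemma one_lt_natCf (hf : ∀ n, 0 < f n) : 1 < natCf f :=
  lt_of_le_of_lt (by exact_mod_cast hf 0) (lt_natCf hf)

lemma natCf_lt (hf : ∀ n, 0 < f n) : natCf f < f 0 + 1 := by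
  have htail := one_lt_natCf (f := fun n => f (n + 1)) fun n => hf (n + 1)
  rw [natCf_eq_add_one_div hf]
  gcongr
  exact (div_lt_one (by linarith)).2 htail

/-- Parity enters because `x ↦ d + 1 / x` reverses the order. -/
lemma natCf_lt_natCf (hf : ∀ n, 0 < f n) (hg : ∀ n, 0 < g n) {n : ℕ}
    (hagree : ∀ i < n, f i = g i) (heven : Even n → f n < g n) (hodd : Odd n → g n < f n) :
    natCf f < natCf g := by
  induction n generalizing f g with
  | zero =>
    have hdigit : (f 0 : ℝ) + 1 ≤ g 0 := by exact_mod_cast heven Even.zero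
    linarith [natCf_lt hf, lt_natCf hg]
  | succ n ih =>
    have htail := ih (f := fun i => g (i + 1)) (g := fun i => f (i + 1)) (fun i => hg (i + 1))
      (fun i => hf (i + 1)) (fun i hi => (hagree (i + 1) (by lia)).symm)
      (fun hn => hodd hn.add_one) (fun hn => heven hn.add_one)
    have hpos := one_le_natCf (f := fun n => g (n + 1)) fun n => hg (n + 1)
    rw [natCf_eq_add_one_div hf, natCf_eq_add_one_div hg, hagree 0 n.succ_pos]
    gcongr

end natCf

/-- The sequence `f` begins with the word `l`. -/
def StartsWith : List ℕ → (ℕ → ℕ) → Prop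
  | [], _ => True
  | d :: l, f => f 0 = d ∧ StartsWith l (fun n => f (n + 1))

section StartsWith

variable {f g : ℕ → ℕ} {l : List ℕ}

lemma startsWith_append {l' : List ℕ} :
    StartsWith (l ++ l') f ↔ StartsWith l f ∧ StartsWith l' (fun n => f (n + l.length)) := by
  induction l generalizing f with
  | nil => simp [StartsWith]
  | cons d l ih => simp only [List.cons_append, StartsWith, ih, and_assoc, List.length_cons,
      add_assoc]

lemma StartsWith.congr (hl : StartsWith l g) (hfg : ∀ i < l.length, f i = g i) :
    StartsWith l f := by
  induction l generalizing f g with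
  | nil => trivial
  | cons d l ih =>
    exact ⟨(hfg 0 (by simp)).trans hl.1, ih hl.2 fun i hi => hfg (i + 1) (by simpa using hi)⟩

lemma StartsWith.apply_eq (hf : StartsWith l f) (hg : StartsWith l g) {i : ℕ}
    (hi : i < l.length) : f i = g i := by
  induction l generalizing f g i with
  | nil => simp at hi
  | cons d l ih =>
    cases i with
    | zero => exact hf.1.trans hg.1.symm
    | succ i => exact ih hf.2 hg.2 (by simpa using hi)

lemma natCf_le_natCf_of_startsWith (hf : ∀ n, 0 < f n) (hg : ∀ n, 0 < g n)
    (hlf : StartsWith l f) (hlg : StartsWith l g)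
    (hnext : ∀ n, l.length ≤ n → (∀ i < n, f i = g i) →
      (Even n → f n ≤ g n) ∧ (Odd n → g n ≤ f n)) : natCf f ≤ natCf g := by
  classical
  by_cases hne : ∃ n, f n ≠ g n
  · set n := Nat.find hne
    have hdiff : f n ≠ g n := Nat.find_spec hne
    have hagree : ∀ i < n, f i = g i := fun i hi => not_not.1 (Nat.find_min hne hi)
    have hlen : l.length ≤ n := not_lt.1 fun hlt => hdiff (hlf.apply_eq hlg hlt)
    obtain ⟨heven, hodd⟩ := hnext n hlen hagree
    exact (natCf_lt_natCf hf hg hagree (fun hn => (heven hn).lt_of_ne hdiff)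
      fun hn => (hodd hn).lt_of_ne hdiff.symm).le
  · push Not at hne
    exact (congrArg natCf (funext hne)).le

end StartsWith

/-- For `0 < x ≤ y` these are the endpoints of the range of `[d₀; d₁, ..., dₙ₋₁, t]` over
`x ≤ t ≤ y`: `cfBound l x y` is the least value and `cfBound l y x` the greatest one. The two
bounds change places with every letter because `t ↦ d + 1 / t` is decreasing. In particular
`cfBound l t t` is `[d₀; d₁, ..., dₙ₋₁, t]` itself. -/
noncomputable def cfBound : List ℕ → ℝ → ℝ → ℝ
  | [], x, _ => x
  | d :: l, x, y => d + 1 / cfBound l y x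

section cfBound

variable {f : ℕ → ℕ} {l : List ℕ}

lemma cfBound_pos (l : List ℕ) {x y : ℝ} (hx : 0 < x) (hy : 0 < y) : 0 < cfBound l x y := by
  induction l generalizing x y with
  | nil => exact hx
  | cons d l ih =>
    have htail := ih hy hx
    rw [cfBound]
    positivity

lemma one_le_cfBound (hl : ∀ d ∈ l, 0 < d) {x y : ℝ} (hx : 1 ≤ x) (hy : 1 ≤ y) :
    1 ≤ cfBound l x y := by
  cases l with
  | nil => exact hx
  | cons d l =>
    have hd : (1 : ℝ) ≤ d := by exact_mod_cast hl d List.mem_cons_self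
    have htail := cfBound_pos l (zero_lt_one.trans_le hy) (zero_lt_one.trans_le hx)
    rw [cfBound]
    exact le_add_of_le_of_nonneg hd (by positivity)

lemma abs_cfBound_sub_cfBound_le (hl : ∀ d ∈ l, 0 < d) {x y : ℝ} (hx : 1 ≤ x) (hy : 1 ≤ y) :
    |cfBound l x x - cfBound l y y| ≤ |x - y| := by
  induction l with
  | nil => rfl
  | cons d l ih =>
    have hl' : ∀ d ∈ l, 0 < d := fun d hd => hl d (List.mem_cons_of_mem _ hd)
    rw [cfBound, cfBound, add_sub_add_left_eq_sub]
    exact (abs_one_div_sub_one_div_le (one_le_cfBound hl' hx hx) (one_le_cfBound hl' hy hy)).trans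
      (ih hl')

lemma add_one_div_cfBound_le (hl : ∀ d ∈ l, 0 < d) {x y : ℝ} (hx : 1 ≤ x) (hxy : x ≤ y) :
    x + 1 / cfBound l x x ≤ y + 1 / cfBound l y y := by
  have hy := hx.trans hxy
  have hinv := (abs_one_div_sub_one_div_le (one_le_cfBound hl hx hx)
    (one_le_cfBound hl hy hy)).trans (abs_cfBound_sub_cfBound_le hl hx hy)
  rw [abs_sub_comm x y, abs_of_nonneg (sub_nonneg.2 hxy)] at hinv
  linarith [le_of_abs_le hinv]

lemma natCf_mem_Icc_cfBound (hf : ∀ n, 0 < f n) (hl : StartsWith l f) {x y : ℝ} (hx : 0 < x)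
    (htail : natCf (fun n => f (n + l.length)) ∈ Icc x y) :
    natCf f ∈ Icc (cfBound l x y) (cfBound l y x) := by
  have hy : 0 < y := hx.trans_le (htail.1.trans htail.2)
  induction l generalizing f with
  | nil => exact htail
  | cons d l ih =>
    obtain ⟨hlower, hupper⟩ := ih (f := fun n => f (n + 1)) (fun n => hf (n + 1)) hl.2
      (by simpa only [List.length_cons, add_assoc, add_comm 1] using htail)
    have hbound := cfBound_pos l hx hy
    have hpos := one_le_natCf (f := fun n => f (n + 1)) fun n => hf (n + 1)
    rw [natCf_eq_add_one_div hf, hl.1, cfBound, cfBound]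
    constructor <;> gcongr

lemma natCf_eq_cfBound (hf : ∀ n, 0 < f n) (hl : StartsWith l f) :
    natCf f = cfBound l (natCf fun n => f (n + l.length)) (natCf fun n => f (n + l.length)) := by
  have hpos := one_le_natCf (f := fun n => f (n + l.length)) fun n => hf (n + l.length)
  have hmem := natCf_mem_Icc_cfBound hf hl (by linarith) (left_mem_Icc.2 le_rfl)
  exact le_antisymm hmem.2 hmem.1

end cfBound

lemma natCf_mem_Icc_of_one_or_two_of_forall {x y : ℝ} (hx : 0 < x)
    (hxy : ∀ g : ℕ → ℕ, (∀ n, g n = 1 ∨ g n = 2) → natCf g ∈ Icc x y)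
    {f : ℕ → ℕ} (hf : ∀ n, f n = 1 ∨ f n = 2) : natCf f ∈ Icc (1 + 1 / y) (2 + 1 / x) := by
  have hpos : ∀ n, 0 < f n := fun n => by have := hf n; lia
  obtain ⟨hlower, hupper⟩ := hxy (fun n => f (n + 1)) fun n => hf (n + 1)
  have hdigit : (1 : ℝ) ≤ f 0 ∧ (f 0 : ℝ) ≤ 2 := by rcases hf 0 with h | h <;> norm_num [h]
  have htail_pos := hx.trans_le hlower
  rw [natCf_eq_add_one_div hpos]
  exact ⟨add_le_add hdigit.1 (one_div_le_one_div_of_le htail_pos hupper),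
    add_le_add hdigit.2 (one_div_le_one_div_of_le hx hlower)⟩

/-- The bounds are `[1; 2, 1, 3]` and `[2; 1, 2, 1, 3]`. -/
lemma natCf_mem_Icc_of_one_or_two {f : ℕ → ℕ} (hf : ∀ n, f n = 1 ∨ f n = 2) :
    natCf f ∈ Icc (15 / 11 : ℝ) (41 / 15) := by
  have hcrude (g : ℕ → ℕ) (hg : ∀ n, g n = 1 ∨ g n = 2) : natCf g ∈ Icc (1 : ℝ) 3 := by
    have hpos : ∀ n, 0 < g n := fun n => by have := hg n; lia
    have hdigit : (g 0 : ℝ) ≤ 2 := by rcases hg 0 with h | h <;> norm_num [h]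
    exact ⟨one_le_natCf hpos, by linarith [natCf_lt hpos]⟩
  have hiter := natCf_mem_Icc_of_one_or_two_of_forall (by norm_num) (fun _ h₃ =>
    natCf_mem_Icc_of_one_or_two_of_forall (by norm_num) (fun _ h₂ =>
      natCf_mem_Icc_of_one_or_two_of_forall (by norm_num) (fun _ h₁ =>
        natCf_mem_Icc_of_one_or_two_of_forall one_pos hcrude h₁) h₂) h₃) hf
  norm_num at hiter ⊢
  exact ⟨by linarith [hiter.1], by linarith [hiter.2]⟩

section Tails

variable {α β : ℤ → ℕ} {k : ℤ}

/-- The one-sided sequence `α k, α (k + 1), ...`, read to the right from the position `k`. -/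
def rightTail (α : ℤ → ℕ) (k : ℤ) : ℕ → ℕ := fun n => α (k + n)

/-- The one-sided sequence `α k, α (k - 1), ...`, read to the left from the position `k`. -/
def leftTail (α : ℤ → ℕ) (k : ℤ) : ℕ → ℕ := fun n => α (k - n)

lemma rightTail_zero : rightTail α k 0 = α k := by simp [rightTail]

lemma leftTail_zero : leftTail α k 0 = α k := by simp [leftTail]

lemma rightTail_add (m : ℕ) : (fun n => rightTail α k (n + m)) = rightTail α (k + m) := by
  funext n
  simp only [rightTail, Nat.cast_add, add_comm (n : ℤ), add_assoc]

lemma leftTail_add (m : ℕ) : (fun n => leftTail α k (n + m)) = leftTail α (k - m) := by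
  funext n
  simp only [leftTail, Nat.cast_add, add_comm (n : ℤ), sub_sub]

lemma natCf_rightTail_eq_cfBound (hα : ∀ n, 0 < α n) {l : List ℕ}
    (hl : StartsWith l (rightTail α k)) :
    natCf (rightTail α k) =
      cfBound l (natCf (rightTail α (k + l.length))) (natCf (rightTail α (k + l.length))) := by
  rw [natCf_eq_cfBound (f := rightTail α k) (fun _ => hα _) hl, rightTail_add]

lemma natCf_leftTail_eq_cfBound (hα : ∀ n, 0 < α n) {l : List ℕ}
    (hl : StartsWith l (leftTail α k)) :
    natCf (leftTail α k) =
      cfBound l (natCf (leftTail α (k - l.length))) (natCf (leftTail α (k - l.length))) := by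
  rw [natCf_eq_cfBound (f := leftTail α k) (fun _ => hα _) hl, leftTail_add]

lemma rightTail_shift (c : ℤ) : rightTail (fun n => α (c + n)) k = rightTail α (c + k) := by
  funext n
  simp only [rightTail, add_assoc]

lemma leftTail_shift (c : ℤ) : leftTail (fun n => α (c + n)) k = leftTail α (c + k) := by
  funext n
  simp only [leftTail, add_sub_assoc]

lemma rightTail_reflect (c : ℤ) : rightTail (fun n => α (c - n)) k = leftTail α (c - k) := by
  funext n
  simp only [rightTail, leftTail, sub_sub]

lemma leftTail_reflect (c : ℤ) : leftTail (fun n => α (c - n)) k = rightTail α (c - k) := by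
  funext n
  simp only [rightTail, leftTail, sub_sub_eq_add_sub, sub_add_eq_add_sub]

lemma lambdaVal_eq_right_add (hα : ∀ n, 0 < α n) :
    lambdaVal α k = natCf (rightTail α k) + 1 / natCf (leftTail α (k - 1)) := by
  have hleft : cfVal (fun n => if n = 0 then 0 else (α (k - n) : ℝ)) =
      1 / natCf (leftTail α (k - 1)) := by
    rw [cfVal_eq_add_one_div fun n => by
      simpa only [Nat.add_eq_zero_iff, one_ne_zero, and_false, if_false, Nat.one_le_cast]
        using Nat.succ_le_of_lt (hα _)]
    simp only [Nat.add_eq_zero_iff, one_ne_zero, and_false, if_false, if_true, zero_add]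
    rw [← Nat.cast_one (R := ℤ), ← leftTail_add]
    rfl
  rw [lambdaVal, hleft]
  rfl

lemma lambdaVal_eq_left_add (hα : ∀ n, 0 < α n) :
    lambdaVal α k = natCf (leftTail α k) + 1 / natCf (rightTail α (k + 1)) := by
  rw [lambdaVal_eq_right_add hα, natCf_eq_add_one_div (f := rightTail α k) fun n => hα _,
    natCf_eq_add_one_div (f := leftTail α k) fun n => hα _, rightTail_add, leftTail_add,
    rightTail_zero, leftTail_zero, Nat.cast_one]
  ring

lemma lambdaVal_shift (hα : ∀ n, 0 < α n) (c : ℤ) :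
    lambdaVal (fun n => α (c + n)) k = lambdaVal α (c + k) := by
  rw [lambdaVal_eq_right_add fun n => hα _, lambdaVal_eq_right_add hα, rightTail_shift,
    leftTail_shift, add_sub_assoc]

lemma lambdaVal_reflect (hα : ∀ n, 0 < α n) (c : ℤ) :
    lambdaVal (fun n => α (c - n)) k = lambdaVal α (c - k) := by
  rw [lambdaVal_eq_right_add fun n => hα _, lambdaVal_eq_left_add hα, rightTail_reflect,
    leftTail_reflect, sub_sub_eq_add_sub, sub_add_eq_add_sub]

lemma add_one_div_add_one_div_lt_lambdaVal (hα : ∀ n, 0 < α n) (k : ℤ) :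
    α k + 1 / (α (k + 1) + 1 : ℝ) + 1 / (α (k - 1) + 1 : ℝ) < lambdaVal α k := by
  have hright := natCf_lt (f := rightTail α (k + 1)) fun n => hα _
  have hleft := natCf_lt (f := leftTail α (k - 1)) fun n => hα _
  have hright_pos := one_le_natCf (f := rightTail α (k + 1)) fun n => hα _
  have hleft_pos := one_le_natCf (f := leftTail α (k - 1)) fun n => hα _
  rw [rightTail_zero] at hright
  rw [leftTail_zero] at hleft
  rw [lambdaVal_eq_right_add hα, natCf_eq_add_one_div (f := rightTail α k) fun n => hα _,
    rightTail_zero, rightTail_add, Nat.cast_one]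
  gcongr

/-- First no letter exceeds `3`, so that each neighbour of a letter `3` contributes at least
`1 / 4` to its value. -/
lemma one_or_two_of_lambdaVal_lt (hα : ∀ n, 0 < α n) (hlt : ∀ k, lambdaVal α k < 7 / 2) (n : ℤ) :
    α n = 1 ∨ α n = 2 := by
  have hle_three (n : ℤ) : α n ≤ 3 := by
    have hright : (0 : ℝ) < 1 / (α (n + 1) + 1 : ℝ) := by positivity
    have hleft : (0 : ℝ) < 1 / (α (n - 1) + 1 : ℝ) := by positivity
    have hfour : (α n : ℝ) < 4 := by
      linarith [hlt n, add_one_div_add_one_div_lt_lambdaVal hα n]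
    exact Nat.le_of_lt_succ (by exact_mod_cast hfour)
  have hquarter (n : ℤ) : (1 : ℝ) / 4 ≤ 1 / (α n + 1) := by
    have hthree : (α n : ℝ) ≤ 3 := by exact_mod_cast hle_three n
    exact one_div_le_one_div_of_le (by positivity) (by linarith)
  have hthree : (α n : ℝ) < 3 := by
    linarith [hlt n, add_one_div_add_one_div_lt_lambdaVal hα n, hquarter (n + 1),
      hquarter (n - 1)]
  have hlt_three : α n < 3 := by exact_mod_cast hthree
  have := hα n
  lia

lemma mem_markovSpectrum_of_isMax (hα : ∀ n, 0 < α n)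
    (hmax : ∀ n, lambdaVal α n ≤ lambdaVal α k) : lambdaVal α k ∈ markovSpectrum :=
  have hbdd : BddAbove (range (lambdaVal α)) := ⟨_, forall_mem_range.2 hmax⟩
  ⟨α, hα, hbdd, le_antisymm (ciSup_le hmax) (le_ciSup hbdd k)⟩

/-- The word `u ++ v` occurs in `α`, with the first letter of `v` at the position `k`. -/
def OccursAt (u v : List ℕ) (α : ℤ → ℕ) (k : ℤ) : Prop :=
  StartsWith u.reverse (leftTail α (k - 1)) ∧ StartsWith v (rightTail α k)

lemma startsWith_cons_rightTail {d : ℕ} {l : List ℕ} :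
    StartsWith (d :: l) (rightTail α k) ↔ α k = d ∧ StartsWith l (rightTail α (k + 1)) := by
  rw [StartsWith, rightTail_add, rightTail_zero, Nat.cast_one]

lemma startsWith_cons_leftTail {d : ℕ} {l : List ℕ} :
    StartsWith (d :: l) (leftTail α k) ↔ α k = d ∧ StartsWith l (leftTail α (k - 1)) := by
  rw [StartsWith, leftTail_add, leftTail_zero, Nat.cast_one]

section OccursAt

variable {u v s t w : List ℕ}

lemma occursAt_append_right :
    OccursAt u (v ++ w) α k ↔ OccursAt u v α k ∧ StartsWith w (rightTail α (k + v.length)) := by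
  rw [OccursAt, OccursAt, startsWith_append, rightTail_add, and_assoc]

lemma occursAt_append_left :
    OccursAt (w ++ u) v α k ↔
      OccursAt u v α k ∧ StartsWith w.reverse (leftTail α (k - 1 - u.length)) := by
  rw [OccursAt, OccursAt, List.reverse_append, startsWith_append, leftTail_add,
    List.length_reverse, and_right_comm]

lemma occursAt_append_singleton {d : ℕ} :
    OccursAt (u ++ [d]) v α k ↔ OccursAt u (d :: v) α (k - 1) := by
  rw [OccursAt, OccursAt, List.reverse_append, List.reverse_singleton, List.singleton_append,
    startsWith_cons_leftTail, startsWith_cons_rightTail, sub_add_cancel, and_left_comm, and_assoc]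

lemma occursAt_append : OccursAt (u ++ w) v α k ↔ OccursAt u (w ++ v) α (k - w.length) := by
  induction w using List.reverseRecOn generalizing v k with
  | nil => simp
  | append_singleton w d ih =>
    rw [← List.append_assoc, occursAt_append_singleton, ih, List.append_assoc,
      List.singleton_append, List.length_append, List.length_singleton, Nat.cast_add,
      Nat.cast_one, sub_sub, add_comm (1 : ℤ)]

lemma OccursAt.exists_of_infix (huv : OccursAt u v α k) (hw : w <:+: u ++ v) :
    ∃ j, OccursAt [] w α j := by
  obtain ⟨p, q, hpq⟩ := hw
  have hall : OccursAt ([] ++ p) (w ++ q) α (k - u.length + p.length) := by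
    rw [occursAt_append, add_sub_cancel_right, ← List.append_assoc, hpq, ← occursAt_append,
      List.nil_append]
    exact huv
  exact ⟨_, trivial, (startsWith_append.1 hall.2).1⟩

lemma OccursAt.congr (huv : OccursAt u v β k)
    (hαβ : ∀ m, k - u.length ≤ m → m < k + v.length → α m = β m) : OccursAt u v α k := by
  refine ⟨huv.1.congr fun i hi => hαβ _ ?_ ?_, huv.2.congr fun i hi => hαβ _ ?_ ?_⟩
  · rw [List.length_reverse] at hi
    lia
  all_goals lia

lemma OccursAt.reflect (huv : OccursAt u v α k) (c : ℤ) :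
    OccursAt v.reverse u.reverse (fun n => α (c - n)) (c - k + 1) := by
  rw [OccursAt, leftTail_reflect, rightTail_reflect, List.reverse_reverse,
    show c - (c - k + 1 - 1) = k by ring, show c - (c - k + 1) = k - 1 by ring]
  exact ⟨huv.2, huv.1⟩

/-- The least value that `[d₀; d₁, ...] + [0; d₋₁, d₋₂, ...]` is allowed by
`natCf_mem_Icc_of_one_or_two` when `u = ... d₋₂ d₋₁` and `v = d₀ d₁ ...` are known. -/
noncomputable def lambdaInf (u v : List ℕ) : ℝ :=
  cfBound v (15 / 11) (41 / 15) + 1 / cfBound u.reverse (41 / 15) (15 / 11)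

/-- The greatest value allowed in the situation of `lambdaInf`. -/
noncomputable def lambdaSup (u v : List ℕ) : ℝ :=
  cfBound v (41 / 15) (15 / 11) + 1 / cfBound u.reverse (15 / 11) (41 / 15)

lemma OccursAt.lambdaVal_mem_Icc (huv : OccursAt u v α k) (hα : ∀ n, α n = 1 ∨ α n = 2) :
    lambdaVal α k ∈ Icc (lambdaInf u v) (lambdaSup u v) := by
  have hpos : ∀ n, 0 < α n := fun n => by have := hα n; lia
  have hright := natCf_mem_Icc_cfBound (fun n => hpos _) huv.2 (by norm_num)
    (natCf_mem_Icc_of_one_or_two fun n => hα _)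
  have hleft := natCf_mem_Icc_cfBound (fun n => hpos _) huv.1 (by norm_num)
    (natCf_mem_Icc_of_one_or_two fun n => hα _)
  have hinf_pos : 0 < cfBound u.reverse (15 / 11) (41 / 15) :=
    cfBound_pos _ (by norm_num) (by norm_num)
  have hleft_pos := hinf_pos.trans_le hleft.1
  rw [lambdaVal_eq_right_add hpos, lambdaInf, lambdaSup]
  exact ⟨add_le_add hright.1 (one_div_le_one_div_of_le hleft_pos hleft.2),
    add_le_add hright.2 (one_div_le_one_div_of_le hinf_pos hleft.1)⟩

/-- The value at a position whose right tail has the continued fraction `x`, if to its left there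
is the word `w` and then a left tail with the continued fraction `y`. -/
noncomputable def joinVal (w : List ℕ) (x y : ℝ) : ℝ := x + 1 / cfBound w.reverse y y

lemma OccursAt.lambdaVal_eq_joinVal (hw : OccursAt w [] α k) (hα : ∀ n, 0 < α n) :
    lambdaVal α k =
      joinVal w (natCf (rightTail α k)) (natCf (leftTail α (k - 1 - w.length))) := by
  rw [lambdaVal_eq_right_add hα, natCf_leftTail_eq_cfBound hα hw.1, List.length_reverse, joinVal]

end OccursAt

end Tails

/-- The left endpoint of the gap. -/
noncomputable def lowerEndpoint : ℝ := 24 * √35 / 43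

/-- The right endpoint of the gap. -/
noncomputable def upperEndpoint : ℝ := (457878845 - 1713407 * √87) / 133663998

lemma lt_lowerEndpoint : 33019 / 10000 < lowerEndpoint := by
  have hsqrt : 5.9160 < √35 := Real.lt_sqrt_of_sq_lt (by norm_num)
  rw [lowerEndpoint]
  linarith

lemma upperEndpoint_lt : upperEndpoint < 3306031 / 1000000 := by
  have hsqrt : 9.32736 < √87 := Real.lt_sqrt_of_sq_lt (by norm_num)
  rw [upperEndpoint]
  linarith

lemma lowerEndpoint_lt_upperEndpoint : lowerEndpoint < upperEndpoint := by
  have hsqrt35 : √35 < 5.917 := (Real.sqrt_lt' (by norm_num)).2 (by norm_num)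
  have hsqrt87 : √87 < 9.3275 := (Real.sqrt_lt' (by norm_num)).2 (by norm_num)
  rw [lowerEndpoint, upperEndpoint]
  linarith

section Extremal

/-- This checks `y = [d; x]` without inverting the surd `x`. -/
lemma add_one_div_eq_of_mul_eq_one {d x y : ℝ} (h : x * (y - d) = 1) : d + 1 / x = y := by
  rw [one_div, inv_eq_of_mul_eq_one_right h, add_sub_cancel]

/-- The periodic sequence of period `8` whose Markov value is `lowerEndpoint`, attained at `0`. -/
def lowerSeq (n : ℤ) : ℕ := if n % 8 = 0 ∨ n % 8 = 3 ∨ n % 8 = 6 then 2 else 1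

lemma lowerSeq_eq_one_or_two (n : ℤ) : lowerSeq n = 1 ∨ lowerSeq n = 2 := by
  rw [lowerSeq]
  split_ifs <;> simp

lemma lowerSeq_pos (n : ℤ) : 0 < lowerSeq n := by
  have := lowerSeq_eq_one_or_two n
  lia

lemma lowerSeq_congr {m n : ℤ} (hmn : m % 8 = n % 8) : lowerSeq m = lowerSeq n := by
  rw [lowerSeq, lowerSeq, hmn]

lemma lowerSeq_six_sub (n : ℤ) : lowerSeq (6 - n) = lowerSeq n := by
  simp only [lowerSeq]
  lia

/-- The largest continued fraction of a tail starting `2, 1, 1, 2, 1, 1` in a sequence all of whose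
values are below `upperEndpoint`. -/
noncomputable def lowerCf : ℝ := natCf (rightTail lowerSeq 0)

lemma lowerCf_eq : lowerCf = (40 + 12 * √35) / 43 := by
  have hword : StartsWith [2, 1, 1, 2, 1, 1, 2, 1] (rightTail lowerSeq 0) := by
    simp [StartsWith, rightTail, lowerSeq]
  have hperiod : rightTail lowerSeq (0 + (8 : ℕ)) = rightTail lowerSeq 0 :=
    funext fun n => lowerSeq_congr (by lia)
  have hpos : 1 ≤ lowerCf := one_le_natCf fun _ => lowerSeq_pos _
  have hfix := natCf_rightTail_eq_cfBound lowerSeq_pos hword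
  rw [show [2, 1, 1, 2, 1, 1, 2, 1].length = 8 from rfl, hperiod, ← lowerCf] at hfix
  have hsq : (43 * lowerCf - 40) ^ 2 = (12 * √35) ^ 2 := by
    rw [mul_pow, Real.sq_sqrt (by norm_num)]
    generalize lowerCf = x at *
    simp only [cfBound] at hfix
    field_simp at hfix
    push_cast at hfix
    linarith
  have hroot := (sq_eq_sq₀ (by linarith) (by positivity)).1 hsq
  linarith

lemma lowerEndpoint_eq_joinVal : lowerEndpoint = joinVal [1] lowerCf lowerCf := by
  have hsqrt : √35 ^ 2 = 35 := Real.sq_sqrt (by norm_num)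
  rw [lowerEndpoint, joinVal, lowerCf_eq]
  generalize √35 = s at *
  simp only [List.reverse_singleton, cfBound]
  push_cast
  rw [add_one_div_eq_of_mul_eq_one (d := 1) (x := (40 + 12 * s) / 43) (y := (40 + 12 * s) / 80)
    (by linear_combination 144 * hsqrt / 3440)]
  exact (add_one_div_eq_of_mul_eq_one (by linear_combination 144 * hsqrt / 3440)).symm

/-- The sequence whose Markov value is `upperEndpoint`, attained at `0`: it is symmetric about
`-7 / 2` and its right half is `1, 2, 1, 2, 1, 1, 2, 2` followed by the repetition of
`2, 1, 2, 1, 1, 2`. -/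
def upperSeq (n : ℤ) : ℕ :=
  let m := max n (-7 - n)
  if m = -2 ∨ m = 0 ∨ m = 3 ∨ 4 ≤ m ∧ (m % 6 = 1 ∨ m % 6 = 4 ∨ m % 6 = 5) then 2 else 1

lemma upperSeq_eq_one_or_two (n : ℤ) : upperSeq n = 1 ∨ upperSeq n = 2 := by
  rw [upperSeq]
  lia

lemma upperSeq_pos (n : ℤ) : 0 < upperSeq n := by
  have := upperSeq_eq_one_or_two n
  lia

lemma upperSeq_neg_seven_sub (n : ℤ) : upperSeq (-7 - n) = upperSeq n := by
  simp only [upperSeq, sub_sub_cancel, max_comm]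

/-- The continued fraction of the right tail of `upperSeq` at `0`: a lower bound for the tails
starting `2, 1, 1, 2, 2, 2` in the sequences all of whose values are below `upperEndpoint`. -/
noncomputable def upperCf : ℝ := natCf (rightTail upperSeq 0)

lemma one_le_upperCf : 1 ≤ upperCf := one_le_natCf fun _ => upperSeq_pos _

lemma natCf_rightTail_upperSeq_six : natCf (rightTail upperSeq 6) = (15 + 3 * √87) / 31 := by
  have hword : StartsWith [1, 2, 1, 1, 2, 2] (rightTail upperSeq 6) := by
    simp [StartsWith, rightTail, upperSeq]
  have hperiod : rightTail upperSeq (6 + (6 : ℕ)) = rightTail upperSeq 6 := by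
    funext n
    simp only [rightTail, upperSeq]
    lia
  set x := natCf (rightTail upperSeq 6)
  have hpos : 1 ≤ x := one_le_natCf fun _ => upperSeq_pos _
  have hfix : x = cfBound [1, 2, 1, 1, 2, 2] x x := by
    have hcf := natCf_rightTail_eq_cfBound upperSeq_pos hword
    rwa [show [1, 2, 1, 1, 2, 2].length = 6 from rfl, hperiod] at hcf
  have hsq : (31 * x - 15) ^ 2 = (3 * √87) ^ 2 := by
    rw [mul_pow, Real.sq_sqrt (by norm_num)]
    clear_value x
    simp only [cfBound] at hfix
    field_simp at hfix
    push_cast at hfix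
    linarith
  have hroot := (sq_eq_sq₀ (by linarith) (by positivity)).1 hsq
  linarith

lemma upperCf_eq : upperCf = (211 - √87) / 78 := by
  have hword : StartsWith [2, 1, 1, 2, 2, 2] (rightTail upperSeq 0) := by
    simp [StartsWith, rightTail, upperSeq]
  have hcf : upperCf = cfBound [2, 1, 1, 2, 2, 2] ((15 + 3 * √87) / 31) ((15 + 3 * √87) / 31) := by
    rw [upperCf, natCf_rightTail_eq_cfBound upperSeq_pos hword,
      show (0 : ℤ) + [2, 1, 1, 2, 2, 2].length = 6 from rfl, natCf_rightTail_upperSeq_six]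
  have hsqrt : √87 ^ 2 = 87 := Real.sq_sqrt (by norm_num)
  rw [hcf]
  generalize √87 = s at *
  simp only [cfBound]
  push_cast
  rw [add_one_div_eq_of_mul_eq_one (d := 2) (x := (15 + 3 * s) / 31) (y := (7 + s) / 6)
      (by linear_combination hsqrt / 62),
    add_one_div_eq_of_mul_eq_one (d := 2) (x := (7 + s) / 6) (y := (17 + 3 * s) / 19)
      (by linear_combination hsqrt / 38),
    add_one_div_eq_of_mul_eq_one (d := 2) (x := (17 + 3 * s) / 19) (y := (35 + 3 * s) / 26)
      (by linear_combination 9 * hsqrt / 494),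
    add_one_div_eq_of_mul_eq_one (d := 1) (x := (35 + 3 * s) / 26) (y := (52 - 3 * s) / 17)
      (by linear_combination -9 * hsqrt / 442),
    add_one_div_eq_of_mul_eq_one (d := 1) (x := (52 - 3 * s) / 17) (y := (165 + 3 * s) / 113)
      (by linear_combination -9 * hsqrt / 1921),
    add_one_div_eq_of_mul_eq_one (d := 2) (x := (165 + 3 * s) / 113) (y := (211 - s) / 78)
      (by linear_combination -3 * hsqrt / 8814)]

lemma upperEndpoint_eq_joinVal :
    upperEndpoint = joinVal [1, 2, 1, 1, 2, 1] upperCf upperCf := by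
  have hsqrt : √87 ^ 2 = 87 := Real.sq_sqrt (by norm_num)
  rw [upperEndpoint, joinVal, upperCf_eq,
    show [1, 2, 1, 1, 2, 1].reverse = [1, 2, 1, 1, 2, 1] from rfl]
  generalize √87 = s at *
  simp only [cfBound]
  push_cast
  rw [add_one_div_eq_of_mul_eq_one (d := 1) (x := (211 - s) / 78) (y := (2342 + 3 * s) / 1709)
      (by linear_combination -3 * hsqrt / 133302),
    add_one_div_eq_of_mul_eq_one (d := 2) (x := (2342 + 3 * s) / 1709) (y := (8760 - 3 * s) / 3209)
      (by linear_combination -9 * hsqrt / 5484181),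
    add_one_div_eq_of_mul_eq_one (d := 1) (x := (8760 - 3 * s) / 3209) (y := (10891 + s) / 7971)
      (by linear_combination -3 * hsqrt / 25578939),
    add_one_div_eq_of_mul_eq_one (d := 1) (x := (10891 + s) / 7971) (y := (77315 - 3 * s) / 44642)
      (by linear_combination -3 * hsqrt / 355841382),
    add_one_div_eq_of_mul_eq_one (d := 2) (x := (77315 - 3 * s) / 44642)
      (y := (345117 + 3 * s) / 133901) (by linear_combination -9 * hsqrt / 5977608442),
    add_one_div_eq_of_mul_eq_one (d := 1) (x := (345117 + 3 * s) / 133901)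
      (y := (411541 - s) / 296502) (by linear_combination -3 * hsqrt / 39701914302)]
  exact (add_one_div_eq_of_mul_eq_one
    (by linear_combination -234 * hsqrt / (296502 * 133663998))).symm

end Extremal

lemma OccursAt.lambdaVal_le_lowerEndpoint {α : ℤ → ℕ} {k : ℤ} {u v : List ℕ}
    (huv : OccursAt u v α k) (hα : ∀ n, α n = 1 ∨ α n = 2)
    (hsup : lambdaSup u v ≤ 33019 / 10000) : lambdaVal α k ≤ lowerEndpoint :=
  (huv.lambdaVal_mem_Icc hα).2.trans (hsup.trans lt_lowerEndpoint.le)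

/-- The sequences all of whose values are below `upperEndpoint`, which forces their letters to be
`1` or `2`. -/
structure IsAdmissible (α : ℤ → ℕ) : Prop where
  eq_one_or_two : ∀ n, α n = 1 ∨ α n = 2
  lambdaVal_lt : ∀ k, lambdaVal α k < upperEndpoint

/-- A word that occurs in no admissible sequence. -/
def IsForbidden (w : List ℕ) : Prop := ∀ α, IsAdmissible α → ∀ k, ¬ OccursAt [] w α k

section Forbidden

variable {s t : List ℕ}

lemma isForbidden_append (hst : 3306031 / 1000000 ≤ lambdaInf s t) : IsForbidden (s ++ t) := by
  intro α h k hocc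
  have hsplit : OccursAt s t α (k + s.length) := by
    rw [← List.nil_append s, occursAt_append, List.nil_append, add_sub_cancel_right]
    exact hocc
  linarith [(hsplit.lambdaVal_mem_Icc h.eq_one_or_two).1, h.lambdaVal_lt (k + s.length),
    upperEndpoint_lt]

lemma isForbidden_21212 : IsForbidden ([2, 1] ++ [2, 1, 2]) :=
  isForbidden_append (by norm_num [lambdaInf, cfBound])

lemma isForbidden_212111 : IsForbidden ([2, 1] ++ [2, 1, 1, 1]) :=
  isForbidden_append (by norm_num [lambdaInf, cfBound])

lemma isForbidden_111212 : IsForbidden ([1, 1, 1] ++ [2, 1, 2]) :=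
  isForbidden_append (by norm_num [lambdaInf, cfBound])

lemma isForbidden_122112121 : IsForbidden ([1, 2, 2, 1, 1] ++ [2, 1, 2, 1]) :=
  isForbidden_append (by norm_num [lambdaInf, cfBound])

lemma isForbidden_121211221 : IsForbidden ([1, 2, 1] ++ [2, 1, 1, 2, 2, 1]) :=
  isForbidden_append (by norm_num [lambdaInf, cfBound])

lemma isForbidden_1212112222 : IsForbidden ([1, 2, 1] ++ [2, 1, 1, 2, 2, 2, 2]) :=
  isForbidden_append (by norm_num [lambdaInf, cfBound])

lemma isForbidden_12121122211 : IsForbidden ([1, 2, 1] ++ [2, 1, 1, 2, 2, 2, 1, 1]) :=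
  isForbidden_append (by norm_num [lambdaInf, cfBound])

lemma isForbidden_112112121122 : IsForbidden ([1, 1, 2, 1, 1, 2, 1] ++ [2, 1, 1, 2, 2]) :=
  isForbidden_append (by norm_num [lambdaInf, cfBound])

lemma isForbidden_221121211211 : IsForbidden ([2, 2, 1, 1] ++ [2, 1, 2, 1, 1, 2, 1, 1]) :=
  isForbidden_append (by norm_num [lambdaInf, cfBound])

lemma isForbidden_22112121122 : IsForbidden ([2, 2, 1, 1] ++ [2, 1, 2, 1, 1, 2, 2]) :=
  isForbidden_append (by norm_num [lambdaInf, cfBound])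

lemma isForbidden_2212112121122 : IsForbidden ([2, 2, 1, 2, 1, 1, 2, 1] ++ [2, 1, 1, 2, 2]) :=
  isForbidden_append (by norm_num [lambdaInf, cfBound])

lemma isForbidden_112121121211222122 :
    IsForbidden ([1, 1, 2, 1, 2, 1, 1, 2, 1] ++ [2, 1, 1, 2, 2, 2, 1, 2, 2]) :=
  isForbidden_append (by norm_num [lambdaInf, cfBound])

lemma isForbidden_1211212112121122212112 :
    IsForbidden ([1, 2, 1, 1, 2, 1, 2, 1, 1, 2, 1] ++ [2, 1, 1, 2, 2, 2, 1, 2, 1, 1, 2]) :=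
  isForbidden_append (by norm_num [lambdaInf, cfBound])

end Forbidden

lemma occursAt_lowerSeq_of_mod_eq_two {k : ℤ} (hk : k % 8 = 2) :
    OccursAt [2, 1, 2, 1] [] lowerSeq k := by
  simp only [OccursAt, List.reverse, List.reverseAux, StartsWith, leftTail, lowerSeq]
  and_intros <;> first | trivial | lia

lemma occursAt_lowerSeq_of_mod_eq_three {k : ℤ} (hk : k % 8 = 3) :
    OccursAt [2, 1, 2, 1, 1] [] lowerSeq k := by
  simp only [OccursAt, List.reverse, List.reverseAux, StartsWith, leftTail, lowerSeq]
  and_intros <;> first | trivial | lia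

lemma occursAt_lowerSeq_of_mod_eq_four {k : ℤ} (hk : k % 8 = 4) :
    OccursAt [1, 1, 2, 1, 1, 2, 1, 2, 1, 1, 2] [] lowerSeq k := by
  simp only [OccursAt, List.reverse, List.reverseAux, StartsWith, leftTail, lowerSeq]
  and_intros <;> first | trivial | lia

lemma occursAt_upperSeq_of_mod_eq_three {k : ℤ} (hk9 : 9 ≤ k) (hk : k % 6 = 3) :
    OccursAt [2, 1, 2, 1] [] upperSeq k := by
  simp only [OccursAt, List.reverse, List.reverseAux, StartsWith, leftTail, upperSeq]
  and_intros <;> first | trivial | lia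

lemma occursAt_upperSeq_of_mod_eq_four {k : ℤ} (hk10 : 10 ≤ k) (hk : k % 6 = 4) :
    OccursAt [2, 1, 2, 1, 1] [] upperSeq k := by
  simp only [OccursAt, List.reverse, List.reverseAux, StartsWith, leftTail, upperSeq]
  and_intros <;> first | trivial | lia

namespace IsAdmissible

variable {α β : ℤ → ℕ} {k : ℤ} {u v w : List ℕ}

lemma pos (h : IsAdmissible α) (n : ℤ) : 0 < α n := by
  have := h.eq_one_or_two n
  lia

lemma shift (h : IsAdmissible α) (c : ℤ) : IsAdmissible (fun n => α (c + n)) :=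
  ⟨fun _ => h.eq_one_or_two _, fun _ => (lambdaVal_shift h.pos c).trans_lt (h.lambdaVal_lt _)⟩

lemma reflect (h : IsAdmissible α) (c : ℤ) : IsAdmissible (fun n => α (c - n)) :=
  ⟨fun _ => h.eq_one_or_two _, fun _ => (lambdaVal_reflect h.pos c).trans_lt (h.lambdaVal_lt _)⟩

lemma not_occursAt_of_infix (h : IsAdmissible α) (hw : IsForbidden w) (hin : w <:+: u ++ v) :
    ¬ OccursAt u v α k := fun hocc =>
  let ⟨j, hj⟩ := hocc.exists_of_infix hin
  hw α h j hj

lemma occursAt_snoc_one_or_two (h : IsAdmissible α) (hocc : OccursAt u v α k) :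
    OccursAt u (v ++ [1]) α k ∨ OccursAt u (v ++ [2]) α k := by
  simp only [occursAt_append_right, hocc, startsWith_cons_rightTail, true_and]
  exact (h.eq_one_or_two _).imp (⟨·, trivial⟩) (⟨·, trivial⟩)

lemma occursAt_cons_one_or_two (h : IsAdmissible α) (hocc : OccursAt u v α k) :
    OccursAt (1 :: u) v α k ∨ OccursAt (2 :: u) v α k := by
  rw [← List.singleton_append, occursAt_append_left, ← List.singleton_append (x := 2),
    occursAt_append_left]
  simp only [hocc, List.reverse_singleton, startsWith_cons_leftTail, true_and]
  exact (h.eq_one_or_two _).imp (⟨·, trivial⟩) (⟨·, trivial⟩)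

lemma not_occursAt_of_lambdaSup_le (h : IsAdmissible α) (hk : lowerEndpoint < lambdaVal α k)
    (hsup : lambdaSup u v ≤ 33019 / 10000) : ¬ OccursAt u v α k := fun hocc =>
  hk.not_ge (hocc.lambdaVal_le_lowerEndpoint h.eq_one_or_two hsup)

lemma ne_of_forall_eq (h : IsAdmissible α) {d : ℕ} (hw : IsForbidden (u ++ [d]))
    (hocc : OccursAt u [] β k) {j : ℤ} (hj : j + u.length ≤ k)
    (hαβ : ∀ m, j ≤ m → m < k → α m = β m) : α k ≠ d := by
  intro hd
  have hocc' : OccursAt u [] α k :=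
    hocc.congr fun m hm hm' => hαβ m (by lia) (by simpa using hm')
  exact h.not_occursAt_of_infix hw (List.infix_refl _)
    ⟨hocc'.1, startsWith_cons_rightTail.2 ⟨hd, trivial⟩⟩

lemma natCf_rightTail_zero_le_lowerCf (h : IsAdmissible α)
    (hstart : StartsWith [2, 1, 1, 2, 1, 1] (rightTail α 0)) :
    natCf (rightTail α 0) ≤ lowerCf := by
  refine natCf_le_natCf_of_startsWith (fun _ => h.pos _) (fun _ => lowerSeq_pos _) hstart
    (by simp [StartsWith, rightTail, lowerSeq]) fun n hn hagree => ?_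
  simp only [List.length_cons, List.length_nil, rightTail, zero_add] at hn hagree ⊢
  have hαβ (m : ℤ) (hm : 0 ≤ m) (hmn : m < n) : α m = lowerSeq m := by
    lift m to ℕ using hm
    exact hagree m (by lia)
  have hmod2 (hmod : (n : ℤ) % 8 = 2) : α n ≠ 2 :=
    h.ne_of_forall_eq (u := [2, 1, 2, 1]) isForbidden_21212
      (occursAt_lowerSeq_of_mod_eq_two hmod) (by simp only [List.length]; lia) hαβ
  have hmod4 (hmod : (n : ℤ) % 8 = 4) : α n ≠ 2 :=
    h.ne_of_forall_eq (u := [1, 1, 2, 1, 1, 2, 1, 2, 1, 1, 2]) isForbidden_112112121122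
      (occursAt_lowerSeq_of_mod_eq_four hmod) (by simp only [List.length]; lia) hαβ
  have hmod3 (hmod : (n : ℤ) % 8 = 3) : α n ≠ 1 :=
    h.ne_of_forall_eq (u := [2, 1, 2, 1, 1]) isForbidden_212111
      (occursAt_lowerSeq_of_mod_eq_three hmod) (by simp only [List.length]; lia) hαβ
  have hdigit := h.eq_one_or_two n
  rw [Nat.even_iff, Nat.odd_iff, lowerSeq]
  lia

lemma upperCf_le_natCf_rightTail_zero (h : IsAdmissible α)
    (hstart : StartsWith [2, 1, 1, 2, 2, 2] (rightTail α 0)) :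
    upperCf ≤ natCf (rightTail α 0) := by
  refine natCf_le_natCf_of_startsWith (fun _ => upperSeq_pos _) (fun _ => h.pos _)
    (by simp [StartsWith, rightTail, upperSeq]) hstart fun n hn hagree => ?_
  simp only [List.length_cons, List.length_nil, rightTail, zero_add] at hn hagree ⊢
  have hαβ (m : ℤ) (hm : 0 ≤ m) (hmn : m < n) : α m = upperSeq m := by
    lift m to ℕ using hm
    exact (hagree m (by lia)).symm
  have hmod3 (hmod : (n : ℤ) % 6 = 3) : α n ≠ 2 :=
    h.ne_of_forall_eq (u := [2, 1, 2, 1]) isForbidden_21212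
      (occursAt_upperSeq_of_mod_eq_three (by lia) hmod) (by simp only [List.length]; lia) hαβ
  have hmod4 (hmod : (n : ℤ) % 6 = 4) : α n ≠ 1 :=
    h.ne_of_forall_eq (u := [2, 1, 2, 1, 1]) isForbidden_212111
      (occursAt_upperSeq_of_mod_eq_four (by lia) hmod) (by simp only [List.length]; lia) hαβ
  have hdigit := h.eq_one_or_two n
  rw [Nat.even_iff, Nat.odd_iff, upperSeq]
  lia

lemma natCf_rightTail_le_lowerCf (h : IsAdmissible α)
    (hstart : StartsWith [2, 1, 1, 2, 1, 1] (rightTail α k)) : natCf (rightTail α k) ≤ lowerCf := by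
  rw [← add_zero k, ← rightTail_shift] at hstart ⊢
  exact (h.shift k).natCf_rightTail_zero_le_lowerCf hstart

lemma natCf_leftTail_le_lowerCf (h : IsAdmissible α)
    (hstart : StartsWith [2, 1, 1, 2, 1, 1] (leftTail α k)) : natCf (leftTail α k) ≤ lowerCf := by
  rw [← sub_zero k, ← rightTail_reflect] at hstart ⊢
  exact (h.reflect k).natCf_rightTail_zero_le_lowerCf hstart

lemma upperCf_le_natCf_leftTail (h : IsAdmissible α)
    (hstart : StartsWith [2, 1, 1, 2, 2, 2] (leftTail α k)) : upperCf ≤ natCf (leftTail α k) := by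
  rw [← sub_zero k, ← rightTail_reflect] at hstart ⊢
  exact (h.reflect k).upperCf_le_natCf_rightTail_zero hstart

end IsAdmissible

namespace IsAdmissible

variable {α : ℤ → ℕ} {k : ℤ}

lemma lambdaVal_le_of_occursAt (h : IsAdmissible α)
    (hocc : OccursAt [1, 1, 2, 1, 1, 2, 1] [2, 1, 1, 2, 1, 1] α k) :
    lambdaVal α k ≤ lowerEndpoint := by
  obtain ⟨hone, hleft⟩ := (occursAt_append_left (w := [1, 1, 2, 1, 1, 2]) (u := [1])).1 hocc
  have hleft_le := h.natCf_leftTail_le_lowerCf hleft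
  have hleft_pos : 1 ≤ natCf (leftTail α (k - 1 - [1].length)) := one_le_natCf fun _ => h.pos _
  have hlower_pos : 0 < lowerCf := by linarith
  rw [OccursAt.lambdaVal_eq_joinVal ⟨hone.1, trivial⟩ h.pos, lowerEndpoint_eq_joinVal, joinVal,
    joinVal]
  simp only [List.reverse_singleton, cfBound]
  gcongr
  exact h.natCf_rightTail_le_lowerCf hocc.2

lemma natCf_rightTail_lt_natCf_leftTail (h : IsAdmissible α)
    (hocc : OccursAt [2, 2, 2, 1, 1, 2, 1, 2, 1, 1, 2, 1] [2, 1, 1, 2, 2, 2] α k) :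
    natCf (rightTail α k) < natCf (leftTail α (k - 7)) := by
  by_contra! hle
  obtain ⟨hmiddle, hleft⟩ :=
    (occursAt_append_left (w := [2, 2, 2, 1, 1, 2]) (u := [1, 2, 1, 1, 2, 1])).1 hocc
  have hvalue := OccursAt.lambdaVal_eq_joinVal ⟨hmiddle.1, trivial⟩ h.pos
  have hposition : k - 1 - ([1, 2, 1, 1, 2, 1].length : ℤ) = k - 7 := by
    simp only [List.length]
    lia
  rw [hposition] at hleft hvalue
  have hle_value : upperEndpoint ≤ lambdaVal α k := by
    rw [hvalue, upperEndpoint_eq_joinVal]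
    calc joinVal [1, 2, 1, 1, 2, 1] upperCf upperCf
        ≤ joinVal [1, 2, 1, 1, 2, 1] (natCf (leftTail α (k - 7))) (natCf (leftTail α (k - 7))) :=
          add_one_div_cfBound_le (by decide) one_le_upperCf (h.upperCf_le_natCf_leftTail hleft)
      _ ≤ joinVal [1, 2, 1, 1, 2, 1] (natCf (rightTail α k)) (natCf (leftTail α (k - 7))) :=
          add_le_add_left hle _
  exact (h.lambdaVal_lt k).not_ge hle_value

/-- The word is a palindrome, so the two tails in `natCf_rightTail_lt_natCf_leftTail` can be
exchanged. -/
lemma not_occursAt_palindrome (h : IsAdmissible α) :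
    ¬ OccursAt [2, 2, 2, 1, 1, 2, 1, 2, 1, 1, 2, 1] [2, 1, 1, 2, 2, 2] α k := by
  intro hocc
  have hocc' : OccursAt [2, 2, 2, 1, 1, 2, 1, 2, 1, 1, 2, 1] [2, 1, 1, 2, 2, 2]
      (fun n => α (2 * k - 7 - n)) k := by
    have hreflect := hocc.reflect (2 * k - 7)
    have hposition : 2 * k - 7 - k + 1 = k - ([1, 2, 1, 1, 2, 1].length : ℤ) := by
      simp only [List.length]
      lia
    rw [hposition] at hreflect
    exact (occursAt_append (u := [2, 2, 2, 1, 1, 2])).2 hreflect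
  have hlt := h.natCf_rightTail_lt_natCf_leftTail hocc
  have hgt := (h.reflect (2 * k - 7)).natCf_rightTail_lt_natCf_leftTail hocc'
  rw [rightTail_reflect, leftTail_reflect, show 2 * k - 7 - k = k - 7 by ring,
    show 2 * k - 7 - (k - 7) = k by ring] at hgt
  exact lt_asymm hlt hgt

lemma occursAt_21121_2112 (h : IsAdmissible α) (hk : lowerEndpoint < lambdaVal α k)
    (hocc : OccursAt [2, 1] [2, 1, 1] α k) : OccursAt [2, 1, 1, 2, 1] [2, 1, 1, 2] α k := by
  have hright₃ : OccursAt [2, 1] [2, 1, 1, 2] α k :=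
    (h.occursAt_snoc_one_or_two hocc).resolve_left
      (h.not_occursAt_of_infix isForbidden_212111 (by decide))
  have hleft₃ : OccursAt [1, 2, 1] [2, 1, 1, 2] α k :=
    (h.occursAt_cons_one_or_two hright₃).resolve_right
      (h.not_occursAt_of_lambdaSup_le hk (by norm_num [lambdaSup, cfBound]))
  have hleft₄ : OccursAt [1, 1, 2, 1] [2, 1, 1, 2] α k :=
    (h.occursAt_cons_one_or_two hleft₃).resolve_right
      (h.not_occursAt_of_infix isForbidden_21212 (by decide))
  exact (h.occursAt_cons_one_or_two hleft₄).resolve_left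
    (h.not_occursAt_of_infix isForbidden_111212 (by decide))

lemma lambdaVal_le_of_occursAt_21121_21121 (h : IsAdmissible α)
    (hocc : OccursAt [2, 1, 1, 2, 1] [2, 1, 1, 2, 1] α k) : lambdaVal α k ≤ lowerEndpoint := by
  by_contra! hk
  have hright₅ : OccursAt [2, 1, 1, 2, 1] [2, 1, 1, 2, 1, 1] α k :=
    (h.occursAt_snoc_one_or_two hocc).resolve_right
      (h.not_occursAt_of_lambdaSup_le hk (by norm_num [lambdaSup, cfBound]))
  have hleft₆ : OccursAt [1, 2, 1, 1, 2, 1] [2, 1, 1, 2, 1, 1] α k :=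
    (h.occursAt_cons_one_or_two hright₅).resolve_right
      (h.not_occursAt_of_infix isForbidden_221121211211 (by decide))
  have hleft₇ : OccursAt [1, 1, 2, 1, 1, 2, 1] [2, 1, 1, 2, 1, 1] α k :=
    (h.occursAt_cons_one_or_two hleft₆).resolve_right
      (h.not_occursAt_of_lambdaSup_le hk (by norm_num [lambdaSup, cfBound]))
  exact hk.not_ge (h.lambdaVal_le_of_occursAt hleft₇)

lemma occursAt_right_of_21121_21122 (h : IsAdmissible α)
    (hocc : OccursAt [2, 1, 1, 2, 1] [2, 1, 1, 2, 2] α k) :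
    OccursAt [2, 1, 1, 2, 1] [2, 1, 1, 2, 2, 2, 1, 2] α k := by
  have hright₅ : OccursAt [2, 1, 1, 2, 1] [2, 1, 1, 2, 2, 2] α k :=
    (h.occursAt_snoc_one_or_two hocc).resolve_left
      (h.not_occursAt_of_infix isForbidden_121211221 (by decide))
  have hright₆ : OccursAt [2, 1, 1, 2, 1] [2, 1, 1, 2, 2, 2, 1] α k :=
    (h.occursAt_snoc_one_or_two hright₅).resolve_right
      (h.not_occursAt_of_infix isForbidden_1212112222 (by decide))
  exact (h.occursAt_snoc_one_or_two hright₆).resolve_left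
    (h.not_occursAt_of_infix isForbidden_12121122211 (by decide))

lemma occursAt_left_of_21121_21122212 (h : IsAdmissible α)
    (hocc : OccursAt [2, 1, 1, 2, 1] [2, 1, 1, 2, 2, 2, 1, 2] α k) :
    OccursAt [1, 1, 2, 1, 2, 1, 1, 2, 1] [2, 1, 1, 2, 2, 2, 1, 2] α k := by
  have hleft₆ : OccursAt [1, 2, 1, 1, 2, 1] [2, 1, 1, 2, 2, 2, 1, 2] α k :=
    (h.occursAt_cons_one_or_two hocc).resolve_right
      (h.not_occursAt_of_infix isForbidden_22112121122 (by decide))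
  have hleft₇ : OccursAt [2, 1, 2, 1, 1, 2, 1] [2, 1, 1, 2, 2, 2, 1, 2] α k :=
    (h.occursAt_cons_one_or_two hleft₆).resolve_left
      (h.not_occursAt_of_infix isForbidden_112112121122 (by decide))
  have hleft₈ : OccursAt [1, 2, 1, 2, 1, 1, 2, 1] [2, 1, 1, 2, 2, 2, 1, 2] α k :=
    (h.occursAt_cons_one_or_two hleft₇).resolve_right
      (h.not_occursAt_of_infix isForbidden_2212112121122 (by decide))
  exact (h.occursAt_cons_one_or_two hleft₈).resolve_right
    (h.not_occursAt_of_infix isForbidden_21212 (by decide))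

lemma not_occursAt_112121121_21122212 (h : IsAdmissible α) :
    ¬ OccursAt [1, 1, 2, 1, 2, 1, 1, 2, 1] [2, 1, 1, 2, 2, 2, 1, 2] α k := by
  intro hocc
  have hright₈ : OccursAt [1, 1, 2, 1, 2, 1, 1, 2, 1] [2, 1, 1, 2, 2, 2, 1, 2, 1] α k :=
    (h.occursAt_snoc_one_or_two hocc).resolve_right
      (h.not_occursAt_of_infix isForbidden_112121121211222122 (by decide))
  have hright₉ : OccursAt [1, 1, 2, 1, 2, 1, 1, 2, 1] [2, 1, 1, 2, 2, 2, 1, 2, 1, 1] α k :=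
    (h.occursAt_snoc_one_or_two hright₈).resolve_right
      (h.not_occursAt_of_infix isForbidden_21212 (by decide))
  have hright₁₀ : OccursAt [1, 1, 2, 1, 2, 1, 1, 2, 1] [2, 1, 1, 2, 2, 2, 1, 2, 1, 1, 2] α k :=
    (h.occursAt_snoc_one_or_two hright₉).resolve_left
      (h.not_occursAt_of_infix isForbidden_212111 (by decide))
  have hleft₁₀ : OccursAt [2, 1, 1, 2, 1, 2, 1, 1, 2, 1] [2, 1, 1, 2, 2, 2, 1, 2, 1, 1, 2] α k :=
    (h.occursAt_cons_one_or_two hright₁₀).resolve_left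
      (h.not_occursAt_of_infix isForbidden_111212 (by decide))
  have hleft₁₁ :
      OccursAt [2, 2, 1, 1, 2, 1, 2, 1, 1, 2, 1] [2, 1, 1, 2, 2, 2, 1, 2, 1, 1, 2] α k :=
    (h.occursAt_cons_one_or_two hleft₁₀).resolve_left
      (h.not_occursAt_of_infix isForbidden_1211212112121122212112 (by decide))
  have hleft₁₂ :
      OccursAt [2, 2, 2, 1, 1, 2, 1, 2, 1, 1, 2, 1] [2, 1, 1, 2, 2, 2, 1, 2, 1, 1, 2] α k :=
    (h.occursAt_cons_one_or_two hleft₁₁).resolve_left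
      (h.not_occursAt_of_infix isForbidden_122112121 (by decide))
  exact h.not_occursAt_palindrome ((occursAt_append_right (v := [2, 1, 1, 2, 2, 2])).1 hleft₁₂).1

lemma lambdaVal_le_of_occursAt_21_211 (h : IsAdmissible α)
    (hocc : OccursAt [2, 1] [2, 1, 1] α k) : lambdaVal α k ≤ lowerEndpoint := by
  by_contra! hk
  rcases h.occursAt_snoc_one_or_two (h.occursAt_21121_2112 hk hocc) with hone | htwo
  · exact hk.not_ge (h.lambdaVal_le_of_occursAt_21121_21121 hone)
  · exact h.not_occursAt_112121121_21122212
      (h.occursAt_left_of_21121_21122212 (h.occursAt_right_of_21121_21122 htwo))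

lemma lambdaVal_le_of_occursAt_11_212 (h : IsAdmissible α)
    (hocc : OccursAt [1, 1] [2, 1, 2] α k) : lambdaVal α k ≤ lowerEndpoint := by
  have hreflect := hocc.reflect (2 * k)
  have hle := (h.reflect (2 * k)).lambdaVal_le_of_occursAt_21_211
    (occursAt_append_singleton.1 hreflect)
  rwa [lambdaVal_reflect h.pos, show 2 * k - (2 * k - k + 1 - 1) = k by ring] at hle

theorem lambdaVal_le_lowerEndpoint (h : IsAdmissible α) (k : ℤ) :
    lambdaVal α k ≤ lowerEndpoint := by
  by_contra! hk
  have hcenter : OccursAt [] [2] α k :=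
    (h.occursAt_snoc_one_or_two (u := []) (v := []) ⟨trivial, trivial⟩).resolve_left
      (h.not_occursAt_of_lambdaSup_le hk (by norm_num [lambdaSup, cfBound]))
  have hright₁ : OccursAt [] [2, 1] α k :=
    (h.occursAt_snoc_one_or_two hcenter).resolve_right
      (h.not_occursAt_of_lambdaSup_le hk (by norm_num [lambdaSup, cfBound]))
  have hleft₁ : OccursAt [1] [2, 1] α k :=
    (h.occursAt_cons_one_or_two hright₁).resolve_right
      (h.not_occursAt_of_lambdaSup_le hk (by norm_num [lambdaSup, cfBound]))
  rcases h.occursAt_snoc_one_or_two hleft₁ with hright₂ | hright₂ <;>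
    rcases h.occursAt_cons_one_or_two hright₂ with hleft₂ | hleft₂
  · exact h.not_occursAt_of_lambdaSup_le hk (by norm_num [lambdaSup, cfBound]) hleft₂
  · exact hk.not_ge (h.lambdaVal_le_of_occursAt_21_211 hleft₂)
  · exact hk.not_ge (h.lambdaVal_le_of_occursAt_11_212 hleft₂)
  · exact h.not_occursAt_of_infix isForbidden_21212 (List.infix_refl _) hleft₂

end IsAdmissible

section Maximum

variable {k : ℤ}

lemma lambdaVal_lowerSeq_zero : lambdaVal lowerSeq 0 = lowerEndpoint := by
  have hword : OccursAt [1] [] lowerSeq 0 := by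
    simp [OccursAt, StartsWith, leftTail, lowerSeq]
  have hleft : leftTail lowerSeq (0 - 1 - [1].length) = rightTail lowerSeq 0 := by
    funext n
    simp only [leftTail, rightTail, lowerSeq, List.length_singleton]
    lia
  rw [hword.lambdaVal_eq_joinVal lowerSeq_pos, hleft, lowerEndpoint_eq_joinVal, lowerCf]

lemma lambdaVal_lowerSeq_of_mod_eq_zero (hk : k % 8 = 0) :
    lambdaVal lowerSeq k = lowerEndpoint := by
  have hperiod : (fun n => lowerSeq (k + n)) = lowerSeq :=
    funext fun n => lowerSeq_congr (by lia)
  rw [← add_zero k, ← lambdaVal_shift lowerSeq_pos, hperiod, lambdaVal_lowerSeq_zero]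

lemma lambdaVal_lowerSeq_le (k : ℤ) : lambdaVal lowerSeq k ≤ lowerEndpoint := by
  by_cases hzero : k % 8 = 0
  · exact (lambdaVal_lowerSeq_of_mod_eq_zero hzero).le
  by_cases hsix : k % 8 = 6
  · have hreflect := lambdaVal_reflect lowerSeq_pos 6 (k := k)
    simp only [lowerSeq_six_sub] at hreflect
    exact (hreflect.trans (lambdaVal_lowerSeq_of_mod_eq_zero (by lia))).le
  by_cases hthree : k % 8 = 3
  · have hword : OccursAt [1, 1] [2, 1, 1] lowerSeq k := by
      simp only [OccursAt, List.reverse, List.reverseAux, StartsWith, leftTail, rightTail, lowerSeq]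
      and_intros <;> first | trivial | lia
    exact hword.lambdaVal_le_lowerEndpoint lowerSeq_eq_one_or_two
      (by norm_num [lambdaSup, cfBound])
  · have hword : OccursAt [] [1] lowerSeq k := by
      simp only [OccursAt, List.reverse, List.reverseAux, StartsWith, rightTail, lowerSeq]
      and_intros <;> first | trivial | lia
    exact hword.lambdaVal_le_lowerEndpoint lowerSeq_eq_one_or_two
      (by norm_num [lambdaSup, cfBound])

lemma lambdaVal_upperSeq_zero : lambdaVal upperSeq 0 = upperEndpoint := by
  have hword : OccursAt [1, 2, 1, 1, 2, 1] [] upperSeq 0 := by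
    simp [OccursAt, StartsWith, leftTail, upperSeq]
  have hleft : leftTail upperSeq (0 - 1 - [1, 2, 1, 1, 2, 1].length) = rightTail upperSeq 0 := by
    funext n
    simp only [leftTail, rightTail, zero_add]
    exact upperSeq_neg_seven_sub n
  rw [hword.lambdaVal_eq_joinVal upperSeq_pos, hleft, upperEndpoint_eq_joinVal, upperCf]

lemma exists_occursAt_upperSeq_of_neg_three_le (hk : -3 ≤ k) (hne : k ≠ 0) :
    ∃ u v, OccursAt u v upperSeq k ∧ lambdaSup u v ≤ 33019 / 10000 := by
  obtain hone | htwo := upperSeq_eq_one_or_two k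
  · exact ⟨[], [1], ⟨trivial, startsWith_cons_rightTail.2 ⟨hone, trivial⟩⟩,
      by norm_num [lambdaSup, cfBound]⟩
  have hcases : k = -2 ∨ (k = 3 ∨ 4 ≤ k ∧ k % 6 = 4) ∨ 5 ≤ k ∧ k % 6 = 5 ∨ 7 ≤ k ∧ k % 6 = 1 := by
    rw [upperSeq] at htwo
    lia
  rcases hcases with rfl | hfour | hfive | hmod_one
  · refine ⟨[2, 1, 2, 1, 1], [2, 1, 2, 1, 1, 2], ?_, by norm_num [lambdaSup, cfBound]⟩
    simp [OccursAt, StartsWith, leftTail, rightTail, upperSeq]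
  · refine ⟨[], [2, 2], ?_, by norm_num [lambdaSup, cfBound]⟩
    simp only [OccursAt, List.reverse, List.reverseAux, StartsWith, rightTail, upperSeq]
    and_intros <;> first | trivial | lia
  · refine ⟨[2], [2], ?_, by norm_num [lambdaSup, cfBound]⟩
    simp only [OccursAt, List.reverse, List.reverseAux, StartsWith, leftTail, rightTail, upperSeq]
    and_intros <;> first | trivial | lia
  · refine ⟨[2, 2, 1], [2, 1, 1, 2], ?_, by norm_num [lambdaSup, cfBound]⟩
    simp only [OccursAt, List.reverse, List.reverseAux, StartsWith, leftTail, rightTail, upperSeq]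
    and_intros <;> first | trivial | lia

lemma lambdaVal_upperSeq_le (k : ℤ) : lambdaVal upperSeq k ≤ upperEndpoint := by
  wlog hk : -3 ≤ k generalizing k
  · have hreflect := lambdaVal_reflect upperSeq_pos (-7) (k := k)
    simp only [upperSeq_neg_seven_sub] at hreflect
    rw [hreflect]
    exact this _ (by lia)
  obtain rfl | hne := eq_or_ne k 0
  · exact lambdaVal_upperSeq_zero.le
  · obtain ⟨u, v, hocc, hsup⟩ := exists_occursAt_upperSeq_of_neg_three_le hk hne
    exact (hocc.lambdaVal_le_lowerEndpoint upperSeq_eq_one_or_two hsup).trans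
      lowerEndpoint_lt_upperEndpoint.le

lemma lowerEndpoint_mem_markovSpectrum : lowerEndpoint ∈ markovSpectrum := by
  rw [← lambdaVal_lowerSeq_zero]
  refine mem_markovSpectrum_of_isMax lowerSeq_pos ?_
  rw [lambdaVal_lowerSeq_zero]
  exact lambdaVal_lowerSeq_le

lemma upperEndpoint_mem_markovSpectrum : upperEndpoint ∈ markovSpectrum := by
  rw [← lambdaVal_upperSeq_zero]
  refine mem_markovSpectrum_of_isMax upperSeq_pos ?_
  rw [lambdaVal_upperSeq_zero]
  exact lambdaVal_upperSeq_le

end Maximum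

lemma markovSpectrum_inter_Ioo_eq_empty :
    markovSpectrum ∩ Ioo lowerEndpoint upperEndpoint = ∅ := by
  rw [eq_empty_iff_forall_notMem]
  rintro _ ⟨⟨α, hα, hbdd, rfl⟩, hlower, hupper⟩
  have hlt (k : ℤ) : lambdaVal α k < upperEndpoint := (le_ciSup hbdd k).trans_lt hupper
  have hletters := one_or_two_of_lambdaVal_lt hα fun k =>
    (hlt k).trans (upperEndpoint_lt.trans (by norm_num))
  have hadmissible : IsAdmissible α := ⟨hletters, hlt⟩
  exact hlower.not_ge (ciSup_le hadmissible.lambdaVal_le_lowerEndpoint)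

/-- The open interval is a gap of the Markov spectrum: the spectrum misses the
open interval, while both endpoints belong to it. -/
theorem markov_gap_16 :
    markovSpectrum ∩ Ioo (24 * Real.sqrt 35 / 43) ((457878845 - 1713407 * Real.sqrt 87) / 133663998) = ∅ ∧
    (24 * Real.sqrt 35 / 43) ∈ markovSpectrum ∧ ((457878845 - 1713407 * Real.sqrt 87) / 133663998) ∈ markovSpectrum :=
  ⟨markovSpectrum_inter_Ioo_eq_empty, lowerEndpoint_mem_markovSpectrum,
    upperEndpoint_mem_markovSpectrum⟩
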